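/- arXiv:0905.0187 — 3 statements merged into one kernel-verified Lean document; each statement's English description precedes it below -/
import Mathlib

section
/- Let ξ be a state on ℓ^∞ invariant under the unit shift T_1. Then ξ is invariant under T_j for every j ∈ ℕ, and for every a > 0, ξ({f(k+a)}_{k≥1}) = ξ({f(k)}_{k≥1}). -/
open Filter

/-- A bounded real sequence (an element of `ℓ^∞`). -/
def IsBddSeq (a : ℕ → ℝ) : Prop := ∃ C, ∀ k, |a k| ≤ C

/-- A state on `ℓ^∞`: a positive linear functional with `ξ(1) = 1`
(linearity and positivity are required on bounded sequences). -/
def IsLinfState (ξ : (ℕ → ℝ) → ℝ) : Prop :=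
  (∀ a b : ℕ → ℝ, IsBddSeq a → IsBddSeq b → ξ (a + b) = ξ a + ξ b) ∧
  (∀ (c : ℝ) (a : ℕ → ℝ), IsBddSeq a → ξ (c • a) = c * ξ a) ∧
  (∀ a : ℕ → ℝ, IsBddSeq a → (∀ k, 0 ≤ a k) → 0 ≤ ξ a) ∧
  ξ (fun _ => 1) = 1

/-- A generalised limit: a state on `ℓ^∞` with
`liminf a ≤ ξ a ≤ limsup a` for every bounded nonnegative sequence. -/
def IsGenLim (ξ : (ℕ → ℝ) → ℝ) : Prop :=
  IsLinfState ξ ∧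
  ∀ a : ℕ → ℝ, IsBddSeq a → (∀ k, 0 ≤ a k) →
    liminf a atTop ≤ ξ a ∧ ξ a ≤ limsup a atTop

/-- Invariance under the unit shift `T_1`. -/
def ShiftInv (ξ : (ℕ → ℝ) → ℝ) : Prop :=
  ∀ a : ℕ → ℝ, IsBddSeq a → ξ (fun k => a (k + 1)) = ξ a

/-- Invariance under the dilations `D_j`, `D_j(a)_k = a_{⌈k/j⌉}`
(`⌈k/j⌉ = (k + j - 1)/j` in natural division). -/
def DilInv (ξ : (ℕ → ℝ) → ℝ) : Prop :=
  ∀ j : ℕ, 0 < j → ∀ a : ℕ → ℝ, IsBddSeq a →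
    ξ (fun k => a ((k + j - 1) / j)) = ξ a

theorem aux_shift (ξ : (ℕ → ℝ) → ℝ) (hT : ShiftInv ξ) (j : ℕ) :
    ∀ a : ℕ → ℝ, IsBddSeq a → ξ (fun k => a (k + j)) = ξ a := by
  induction j with
  | zero => intro a _; rfl
  | succ n ih =>
    intro a ha
    obtain ⟨C, hC⟩ := ha
    have h1 := hT (fun k => a (k + n)) ⟨C, fun k => hC _⟩
    rw [← ih a ⟨C, hC⟩, ← h1]
    congr 1
    funext k
    congr 1
    ring

theorem aux_mono (ξ : (ℕ → ℝ) → ℝ) (hst : IsLinfState ξ) (a b e : ℕ → ℝ) (D : ℝ)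
    (ha : IsBddSeq a) (hb : IsBddSeq b) (he : IsBddSeq e)
    (h : ∀ k, a k ≤ b k + D * e k) : ξ a ≤ ξ b + D * ξ e := by
  obtain ⟨hadd, hsmul, hpos, -⟩ := hst
  have hDe : IsBddSeq (D • e) := by
    obtain ⟨C, hC⟩ := he
    refine ⟨|D| * C, fun k => ?_⟩
    simp only [Pi.smul_apply, smul_eq_mul, abs_mul]
    exact mul_le_mul_of_nonneg_left (hC k) (abs_nonneg _)
  have hna : IsBddSeq ((-1 : ℝ) • a) := by
    obtain ⟨C, hC⟩ := ha
    exact ⟨C, fun k => by simpa using hC k⟩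
  have hs : ∀ u v : ℕ → ℝ, IsBddSeq u → IsBddSeq v → IsBddSeq (u + v) := by
    rintro u v ⟨C, hC⟩ ⟨E, hE⟩
    exact ⟨C + E, fun k => (abs_add_le _ _).trans (add_le_add (hC k) (hE k))⟩
  have h1 := hpos ((b + D • e) + (-1 : ℝ) • a) (hs _ _ (hs _ _ hb hDe) hna) (fun k => by
    have := h k
    simp only [Pi.add_apply, Pi.smul_apply, smul_eq_mul]
    linarith)
  rw [hadd _ _ (hs _ _ hb hDe) hna, hadd _ _ hb hDe, hsmul _ _ he, hsmul _ _ ha] at h1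
  linarith

theorem aux_zero (ξ : (ℕ → ℝ) → ℝ) (hst : IsLinfState ξ) (hT : ShiftInv ξ) (b : ℝ)
    (hb : 0 < b) : IsBddSeq (fun k : ℕ => 1 / ((k : ℝ) + b)) ∧
      ξ (fun k : ℕ => 1 / ((k : ℝ) + b)) ≤ 0 := by
  have hbd : ∀ N k : ℕ, |1 / (((k + N : ℕ) : ℝ) + b)| ≤ 1 / ((N : ℝ) + b) := by
    intro N k
    rw [abs_of_pos (by positivity)]
    apply one_div_le_one_div_of_le (by positivity)
    push_cast
    have : (0 : ℝ) ≤ k := k.cast_nonneg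
    linarith
  have he : IsBddSeq (fun k : ℕ => 1 / ((k : ℝ) + b)) := ⟨_, fun k => hbd 0 k⟩
  refine ⟨he, ?_⟩
  have key : ∀ N : ℕ, ξ (fun k : ℕ => 1 / ((k : ℝ) + b)) ≤ 1 / ((N : ℝ) + b) := by
    intro N
    have h1 := aux_shift ξ hT N _ he
    have hone : IsBddSeq (fun _ => 1) := ⟨1, fun k => by simp⟩
    have hzero : IsBddSeq ((0 : ℝ) • (fun _ => (1 : ℝ))) := ⟨0, fun k => by simp⟩
    have h2 := aux_mono ξ hst (fun k : ℕ => 1 / (((k + N : ℕ) : ℝ) + b))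
      ((0 : ℝ) • (fun _ => (1 : ℝ))) (fun _ => 1) (1 / ((N : ℝ) + b)) ⟨_, hbd N⟩ hzero hone
      (fun k => by simpa using (le_abs_self _).trans (hbd N k))
    rw [hst.2.1 _ _ hone, hst.2.2.2] at h2
    rw [← h1]
    linarith
  have hlim : Tendsto (fun N : ℕ => 1 / ((N : ℝ) + b)) atTop (nhds 0) := by
    apply Tendsto.div_atTop tendsto_const_nhds
    exact tendsto_atTop_add_const_right _ _ tendsto_natCast_atTop_atTop
  exact ge_of_tendsto' hlim key

/-- if a state `ξ` on `ℓ^∞` is invariant under the unit shift `T_1`,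
then it is invariant under `T_j` for every `j ∈ ℕ`, and for every `a > 0`,
`ξ({f(k+a)}_k) = ξ({f(k)}_k)`, where `f` is bounded on `[0,∞)` with `f(t) = g(t)/t`
for `t > 0` and `g` nondecreasing on `[0,∞)`. -/
theorem shiftInv_iterate_and_real_translation
    (ξ : (ℕ → ℝ) → ℝ) (hst : IsLinfState ξ) (hT : ShiftInv ξ)
    (f g : ℝ → ℝ) (hfb : ∃ C, ∀ t ≥ (0 : ℝ), |f t| ≤ C)
    (hfg : ∀ t > (0 : ℝ), f t = g t / t) (hg : MonotoneOn g (Set.Ici 0)) :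
    (∀ j : ℕ, ∀ a : ℕ → ℝ, IsBddSeq a → ξ (fun k => a (k + j)) = ξ a) ∧
    (∀ b : ℝ, 0 < b → ξ (fun k => f ((k : ℝ) + b)) = ξ (fun k => f (k : ℝ))) := by
  refine ⟨fun j => aux_shift ξ hT j, fun b hb => ?_⟩
  obtain ⟨C, hC⟩ := hfb
  obtain ⟨he, he0⟩ := aux_zero ξ hst hT b hb
  have hC0 : 0 ≤ C := (abs_nonneg _).trans (hC 0 le_rfl)
  obtain ⟨n, hn⟩ := exists_nat_ge b
  have hf0 : IsBddSeq (fun k : ℕ => f (k : ℝ)) := ⟨C, fun k => hC _ k.cast_nonneg⟩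
  have hfn : IsBddSeq (fun k : ℕ => f ((k + n : ℕ) : ℝ)) :=
    ⟨C, fun k => hC _ (Nat.cast_nonneg _)⟩
  have hfb : IsBddSeq (fun k : ℕ => f ((k : ℝ) + b)) := ⟨C, fun k => hC _ (by positivity)⟩
  have hgf : ∀ t > (0 : ℝ), g t = f t * t := by
    intro t ht
    rw [hfg t ht]
    field_simp
  have h1 := aux_mono ξ hst _ _ _ (C * (n - b)) hfb hfn he (by
    intro k
    have hk : (0 : ℝ) ≤ k := k.cast_nonneg
    have hp : 0 < (k : ℝ) + b := by positivity
    have hm : g (k + b) ≤ g (k + n) := hg (Set.mem_Ici.2 hp.le)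
      (Set.mem_Ici.2 (by positivity)) (by linarith)
    rw [hgf _ hp, hgf _ (by linarith)] at hm
    have hc := (le_abs_self _).trans (hC (k + n) (by linarith))
    have h3 := mul_le_mul_of_nonneg_right hc (sub_nonneg.2 hn)
    push_cast
    have : f (k + n) + C * (n - b) * (1 / (k + b)) =
      (f (k + n) * (k + b) + C * (n - b)) / (k + b) := by field_simp
    rw [this, le_div_iff₀ hp]
    linarith)
  have h2 := aux_mono ξ hst _ _ _ (2 * C * b) hf0 hfb he (by
    intro k
    have hp : 0 < (k : ℝ) + b := by positivity
    have hcb := abs_le.1 (hC (k + b) hp.le)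
    have hc := abs_le.1 (hC k k.cast_nonneg)
    have : f (k + b) + 2 * C * b * (1 / (k + b)) =
      (f (k + b) * (k + b) + 2 * C * b) / (k + b) := by field_simp
    rw [this, le_div_iff₀ hp]
    rcases Nat.eq_zero_or_pos k with rfl | hk
    · simp only [Nat.cast_zero, zero_add] at *
      nlinarith
    · have hk : (0 : ℝ) < k := by exact_mod_cast hk
      have hm : g k ≤ g (k + b) := hg (Set.mem_Ici.2 hk.le)
        (Set.mem_Ici.2 hp.le) (by linarith)
      rw [hgf _ hp, hgf _ hk] at hm
      nlinarith [mul_nonneg hC0 hb.le])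
  have h3 : ξ (fun k : ℕ => f ((k + n : ℕ) : ℝ)) = ξ (fun k : ℕ => f (k : ℝ)) :=
    aux_shift ξ hT n _ hf0
  have h4 := mul_nonpos_of_nonneg_of_nonpos (mul_nonneg hC0 (sub_nonneg.2 hn)) he0
  have h5 := mul_nonpos_of_nonneg_of_nonpos (mul_nonneg (mul_nonneg zero_le_two hC0) hb.le) he0
  apply le_antisymm <;> linarith
end

section
/- Let ξ be a state on ℓ^∞ invariant under the unit shift T_1, and let a > 0, b ≥ 0. Define M_k := sup_{t∈[ak−b, ak+b]} f(t) − inf_{t∈[ak−b, ak+b]} f(t) for k ≥ ⌈b/a⌉, and M_k := 0 for smaller k. Then ξ({M_k}_{k≥1}) = 0. -/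
open Filter

theorem aux_osc (f g : ℝ → ℝ) (C : ℝ) (hC : ∀ t ≥ (0 : ℝ), |f t| ≤ C)
    (hfg : ∀ t > (0 : ℝ), f t = g t / t) (hg : MonotoneOn g (Set.Ici 0))
    (u v t s : ℝ) (hu : 0 < u) (hut : u ≤ t) (htv : t ≤ v) (hus : u ≤ s) (hsv : s ≤ v) :
    f t ≤ f s + (f v - f u + 2 * (v - u) * C / u) := by
  have key : ∀ x y, 0 < x → x ≤ y → x * f x ≤ y * f y := by
    intro x y hx hxy
    have hy : 0 < y := lt_of_lt_of_le hx hxy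
    rw [hfg x hx, hfg y hy, mul_div_cancel₀ _ hx.ne', mul_div_cancel₀ _ hy.ne']
    exact hg hx.le hy.le hxy
  have ht : 0 < t := by linarith
  have hs : 0 < s := by linarith
  have hv : 0 < v := by linarith
  have h1 := key t v ht htv
  have h2 := key u s hu hus
  have c0 : 0 ≤ C := le_trans (abs_nonneg _) (hC t ht.le)
  have cv := (abs_le.mp (hC v hv.le)).2
  have cs := (abs_le.mp (hC s hs.le)).2
  have e1 : u * (f t - f v) ≤ (v - u) * C := by
    rcases le_total (f t - f v) 0 with h | h
    · have : u * (f t - f v) ≤ 0 := mul_nonpos_of_nonneg_of_nonpos hu.le h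
      have : 0 ≤ (v - u) * C := mul_nonneg (by linarith) c0
      linarith
    · have a1 : u * (f t - f v) ≤ t * (f t - f v) := mul_le_mul_of_nonneg_right hut h
      have a2 : (v - t) * f v ≤ (v - t) * C := mul_le_mul_of_nonneg_left cv (by linarith)
      have a3 : (v - t) * C ≤ (v - u) * C := mul_le_mul_of_nonneg_right (by linarith) c0
      nlinarith
  have e2 : u * (f u - f s) ≤ (v - u) * C := by
    have a2 : (s - u) * f s ≤ (s - u) * C := mul_le_mul_of_nonneg_left cs (by linarith)
    have a3 : (s - u) * C ≤ (v - u) * C := mul_le_mul_of_nonneg_right (by linarith) c0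
    nlinarith
  have e3 : f t - f s - (f v - f u) ≤ 2 * (v - u) * C / u := by
    rw [le_div_iff₀ hu]; nlinarith
  linarith

theorem bdd_shift {x : ℕ → ℝ} (hx : IsBddSeq x) (n : ℕ) : IsBddSeq (fun k => x (k + n)) := by
  obtain ⟨C, hC⟩ := hx
  exact ⟨C, fun k => hC _⟩

theorem bdd_add {x y : ℕ → ℝ} (hx : IsBddSeq x) (hy : IsBddSeq y) : IsBddSeq (x + y) := by
  obtain ⟨C, hC⟩ := hx
  obtain ⟨D, hD⟩ := hy
  exact ⟨C + D, fun k => (abs_add_le _ _).trans (add_le_add (hC k) (hD k))⟩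

theorem bdd_smul {x : ℕ → ℝ} (c : ℝ) (hx : IsBddSeq x) : IsBddSeq (c • x) := by
  obtain ⟨C, hC⟩ := hx
  refine ⟨|c| * C, fun k => ?_⟩
  simp only [Pi.smul_apply, smul_eq_mul, abs_mul]
  exact mul_le_mul_of_nonneg_left (hC k) (abs_nonneg c)

theorem state_shift {ξ : (ℕ → ℝ) → ℝ} (hT : ShiftInv ξ) {x : ℕ → ℝ} (hx : IsBddSeq x) (n : ℕ) :
    ξ (fun k => x (k + n)) = ξ x := by
  induction n with
  | zero => rfl
  | succ n ih =>
    rw [← ih, ← hT _ (bdd_shift hx n)]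
    congr 1; funext k; congr 1; ring

theorem state_mono {ξ : (ℕ → ℝ) → ℝ} (hst : IsLinfState ξ) {x y : ℕ → ℝ} (hx : IsBddSeq x)
    (hy : IsBddSeq y) (h : ∀ k, x k ≤ y k) : ξ x ≤ ξ y := by
  obtain ⟨hadd, hsm, hpos, -⟩ := hst
  have h1 := hpos (y + (-1 : ℝ) • x) (bdd_add hy (bdd_smul _ hx)) (fun k => by
    simp only [Pi.add_apply, Pi.smul_apply, smul_eq_mul]; linarith [h k])
  rw [hadd _ _ hy (bdd_smul _ hx), hsm _ _ hx] at h1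
  linarith

theorem bdd_inv : IsBddSeq (fun k : ℕ => 1 / ((k : ℝ) + 1)) := by
  refine ⟨1, fun k => ?_⟩
  rw [abs_of_nonneg (by positivity), div_le_one (by positivity)]
  linarith [(Nat.cast_nonneg k : (0 : ℝ) ≤ k)]

theorem state_inv {ξ : (ℕ → ℝ) → ℝ} (hst : IsLinfState ξ) (hT : ShiftInv ξ) :
    ξ (fun k : ℕ => 1 / ((k : ℝ) + 1)) ≤ 0 := by
  have one_bdd : IsBddSeq (fun _ => (1 : ℝ)) := ⟨1, fun _ => by simp⟩
  refine le_of_forall_pos_le_add fun ε hε => ?_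
  obtain ⟨n, hn⟩ := exists_nat_one_div_lt hε
  rw [← state_shift hT bdd_inv n]
  have h := state_mono hst (bdd_shift bdd_inv n) (bdd_smul ε one_bdd) (fun k => by
    simp only [Pi.smul_apply, smul_eq_mul, mul_one]
    refine le_trans ?_ hn.le
    apply one_div_le_one_div_of_le (by positivity)
    push_cast
    linarith [(Nat.cast_nonneg k : (0 : ℝ) ≤ k)])
  rw [hst.2.1 _ _ one_bdd, hst.2.2.2] at h
  linarith

/-- for a `T_1`-invariant state `ξ` on `ℓ^∞`, and `a > 0`, `b ≥ 0`,
the sequence `M_k := sup_{t∈[ak−b,ak+b]} f(t) − inf_{t∈[ak−b,ak+b]} f(t)` (for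
`k ≥ ⌈b/a⌉`, and `0` for smaller `k`) satisfies `ξ(M) = 0`. -/
theorem shiftInv_state_vanishes_on_oscillation
    (ξ : (ℕ → ℝ) → ℝ) (hst : IsLinfState ξ) (hT : ShiftInv ξ)
    (f g : ℝ → ℝ) (hfb : ∃ C, ∀ t ≥ (0 : ℝ), |f t| ≤ C)
    (hfg : ∀ t > (0 : ℝ), f t = g t / t) (hg : MonotoneOn g (Set.Ici 0))
    (a b : ℝ) (ha : 0 < a) (hb : 0 ≤ b) :
    ξ (fun k => if b / a ≤ (k : ℝ) then
        sSup (f '' Set.Icc (a * k - b) (a * k + b))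
          - sInf (f '' Set.Icc (a * k - b) (a * k + b))
      else 0) = 0 := by
  obtain ⟨C, hC⟩ := hfb
  set M : ℕ → ℝ := fun k => if b / a ≤ (k : ℝ) then
        sSup (f '' Set.Icc (a * k - b) (a * k + b))
          - sInf (f '' Set.Icc (a * k - b) (a * k + b))
      else 0 with hM
  have c0 : 0 ≤ C := le_trans (abs_nonneg _) (hC 0 le_rfl)
  have hne : ∀ k : ℕ, (f '' Set.Icc (a * k - b) (a * k + b)).Nonempty := fun k =>
    ⟨f (a * k), a * k, ⟨by linarith, by linarith⟩, rfl⟩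
  have hM0 : ∀ k, 0 ≤ M k ∧ M k ≤ 2 * C := by
    intro k
    simp only [hM]
    split_ifs with hk
    · have hk' : 0 ≤ a * k - b := by
        rw [div_le_iff₀ ha] at hk; linarith
      have hup : ∀ y ∈ f '' Set.Icc (a * k - b) (a * k + b), y ≤ C := by
        rintro _ ⟨t, ht, rfl⟩
        exact (abs_le.mp (hC t (hk'.trans ht.1))).2
      have hlo : ∀ y ∈ f '' Set.Icc (a * k - b) (a * k + b), -C ≤ y := by
        rintro _ ⟨t, ht, rfl⟩
        exact (abs_le.mp (hC t (hk'.trans ht.1))).1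
      have h1 := csSup_le (hne k) hup
      have h2 := le_csInf (hne k) hlo
      have h3 := csInf_le_csSup (s := f '' Set.Icc (a * k - b) (a * k + b)) (hne k) ⟨_, hlo⟩ ⟨_, hup⟩
      constructor <;> linarith
    · exact ⟨le_rfl, by linarith⟩
  have hMb : IsBddSeq M := ⟨2 * C, fun k => by
    rw [abs_of_nonneg (hM0 k).1]; exact (hM0 k).2⟩
  apply le_antisymm _ (hst.2.2.1 M hMb fun k => (hM0 k).1)
  obtain ⟨m, hm⟩ := exists_nat_ge (b / a)
  have hmb : b ≤ a * m := by
    rw [div_le_iff₀ ha] at hm; linarith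
  have hh : IsBddSeq (fun k : ℕ => f (a * k)) := ⟨C, fun k => hC _ (by positivity)⟩
  have hle : ∀ k, M (k + (m + 1)) ≤ ((fun k : ℕ => f (a * ((k + (2 * m + 1) : ℕ) : ℝ)))
      + ((-1 : ℝ) • (fun k : ℕ => f (a * ((k + 1 : ℕ) : ℝ)))
      + (4 * m * C) • (fun k : ℕ => 1 / ((k : ℝ) + 1)))) k := by
    intro k
    have hk0 : (0 : ℝ) ≤ k := Nat.cast_nonneg k
    have hcond : b / a ≤ ((k + (m + 1) : ℕ) : ℝ) := by push_cast; linarith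
    simp only [hM, if_pos hcond, Pi.add_apply, Pi.smul_apply, smul_eq_mul]
    set u : ℝ := a * ((k + 1 : ℕ) : ℝ) with hu
    set v : ℝ := a * ((k + (2 * m + 1) : ℕ) : ℝ) with hv
    have hu0 : 0 < u := by positivity
    have e : 2 * (v - u) * C / u = 4 * m * C * (1 / ((k : ℝ) + 1)) := by
      rw [hu, hv]; push_cast; field_simp; ring
    have hul : u ≤ a * ((k + (m + 1) : ℕ) : ℝ) - b := by
      rw [hu]; push_cast; linarith
    have hvl : a * ((k + (m + 1) : ℕ) : ℝ) + b ≤ v := by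
      rw [hv]; push_cast; linarith
    rw [← e]
    have : sSup (f '' Set.Icc (a * ((k + (m + 1) : ℕ) : ℝ) - b) (a * ((k + (m + 1) : ℕ) : ℝ) + b))
        - (f v - f u + 2 * (v - u) * C / u) ≤
        sInf (f '' Set.Icc (a * ((k + (m + 1) : ℕ) : ℝ) - b) (a * ((k + (m + 1) : ℕ) : ℝ) + b)) := by
      apply le_csInf (hne _)
      rintro _ ⟨s, hs, rfl⟩
      rw [sub_le_iff_le_add]
      apply csSup_le (hne _)
      rintro _ ⟨t, ht, rfl⟩
      exact aux_osc f g C hC hfg hg u v t s hu0 (hul.trans ht.1) (ht.2.trans hvl)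
        (hul.trans hs.1) (hs.2.trans hvl)
    linarith
  have b1 := bdd_shift hh (2 * m + 1)
  have b2 := bdd_shift hh 1
  have b3 := bdd_smul (4 * m * C) bdd_inv
  have b4 := bdd_add (bdd_smul (-1) b2) b3
  have key := state_mono hst (bdd_shift hMb (m + 1)) (bdd_add b1 b4) hle
  rw [state_shift hT hMb, hst.1 _ _ b1 b4, hst.1 _ _ (bdd_smul (-1) b2) b3,
    hst.2.1 _ _ b2, hst.2.1 _ _ bdd_inv, state_shift hT hh (2 * m + 1), state_shift hT hh 1] at key
  have := mul_nonpos_of_nonneg_of_nonpos (by positivity : 0 ≤ 4 * (m : ℝ) * C) (state_inv hst hT)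
  linarith
end

section
/- Let ξ be a state on ℓ^∞ invariant under the unit shift T_1 and invariant under the dilation D_j for every j ∈ ℕ. Then for every a > 0, ξ({f(k/a)}_{k≥1}) = ξ({f(k)}_{k≥1}). -/
open Filter

lemma bdd_shift_s5 {a : ℕ → ℝ} (ha : IsBddSeq a) (N : ℕ) : IsBddSeq (fun k => a (k + N)) := by
  obtain ⟨C, hC⟩ := ha
  exact ⟨C, fun k => hC _⟩

lemma shift_many {ξ : (ℕ → ℝ) → ℝ} (hT : ShiftInv ξ) {a : ℕ → ℝ} (ha : IsBddSeq a) (N : ℕ) :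
    ξ (fun k => a (k + N)) = ξ a := by
  induction N with
  | zero => rfl
  | succ n ih =>
    rw [← ih, ← hT _ (bdd_shift_s5 ha n)]
    congr 1
    funext k
    congr 1
    omega

lemma state_mono_s5 {ξ : (ℕ → ℝ) → ℝ} (hst : IsLinfState ξ) {a b : ℕ → ℝ}
    (ha : IsBddSeq a) (hb : IsBddSeq b) {ε : ℝ} (h : ∀ k, a k ≤ b k + ε) : ξ a ≤ ξ b + ε := by
  obtain ⟨h1, h2, h3, h4⟩ := hst
  obtain ⟨A, hA⟩ := ha
  obtain ⟨B, hB⟩ := hb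
  have ha : IsBddSeq a := ⟨A, hA⟩
  have hb : IsBddSeq b := ⟨B, hB⟩
  have hone : IsBddSeq (fun _ => (1 : ℝ)) := ⟨1, fun _ => by simp⟩
  have hc : IsBddSeq (ε • (fun _ => (1 : ℝ))) := ⟨|ε|, fun _ => by simp⟩
  have hna : IsBddSeq ((-1 : ℝ) • a) := ⟨A, fun k => by simpa using hA k⟩
  have hbc : IsBddSeq (b + ε • (fun _ => (1 : ℝ))) := ⟨B + |ε|, fun k => by
    have := abs_add_le (b k) ε
    have := hB k
    simp only [Pi.add_apply, Pi.smul_apply, smul_eq_mul, mul_one]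
    linarith⟩
  have hall : IsBddSeq ((b + ε • (fun _ => (1 : ℝ))) + (-1 : ℝ) • a) := by
    obtain ⟨X, hX⟩ := hbc
    refine ⟨X + A, fun k => ?_⟩
    have e1 := hX k
    have e2 : |((-1 : ℝ) • a) k| ≤ A := by simpa using hA k
    exact (abs_add_le _ _).trans (add_le_add e1 e2)
  have := h3 _ hall (fun k => by
    have := h k
    simp only [Pi.add_apply, Pi.smul_apply, smul_eq_mul, mul_one]
    linarith)
  rw [h1 _ _ hbc hna, h1 _ _ hb hc, h2 _ _ hone, h2 _ _ ha, h4] at this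
  linarith

lemma state_mono_ev {ξ : (ℕ → ℝ) → ℝ} (hst : IsLinfState ξ) (hT : ShiftInv ξ) {a b : ℕ → ℝ}
    (ha : IsBddSeq a) (hb : IsBddSeq b)
    (h : ∀ ε > 0, ∃ N, ∀ k ≥ N, a k ≤ b k + ε) : ξ a ≤ ξ b := by
  refine le_of_forall_pos_le_add fun ε hε => ?_
  obtain ⟨N, hN⟩ := h ε hε
  rw [← shift_many hT ha N, ← shift_many hT hb N]
  exact state_mono_s5 hst (bdd_shift_s5 ha N) (bdd_shift_s5 hb N) fun k => hN _ (by omega)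

def GoodFun (f : ℝ → ℝ) : Prop :=
  (∃ C, ∀ t ≥ (0 : ℝ), |f t| ≤ C) ∧ ∀ t u : ℝ, 0 < t → t ≤ u → t * f t ≤ u * f u

lemma GoodFun.scale {f : ℝ → ℝ} (hf : GoodFun f) {r : ℝ} (hr : 0 < r) :
    GoodFun (fun t => f (r * t)) := by
  obtain ⟨⟨C, hC⟩, hm⟩ := hf
  refine ⟨⟨C, fun t ht => hC _ (by positivity)⟩, fun t u ht htu => ?_⟩
  have := hm (r * t) (r * u) (by positivity) (by gcongr)
  have h2 : r * (t * f (r * t)) ≤ r * (u * f (r * u)) := by linarith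
  exact le_of_mul_le_mul_left h2 hr

lemma GoodFun.bdd {f : ℝ → ℝ} (hf : GoodFun f) {s : ℕ → ℝ} (hs : ∀ k, 0 ≤ s k) :
    IsBddSeq (fun k => f (s k)) := by
  obtain ⟨⟨C, hC⟩, hm⟩ := hf
  exact ⟨C, fun k => hC _ (hs k)⟩

lemma GoodFun.compare {ξ : (ℕ → ℝ) → ℝ} (hst : IsLinfState ξ) (hT : ShiftInv ξ)
    {f : ℝ → ℝ} (hf : GoodFun f) {s u : ℕ → ℝ} (hs : ∀ k, 0 ≤ s k) {c d : ℝ} (hc : 0 < c)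
    (hsc : ∀ k : ℕ, c * k ≤ s k) (hsu : ∀ k, s k ≤ u k) (hus : ∀ k, u k ≤ s k + d) :
    ξ (fun k => f (s k)) ≤ ξ (fun k => f (u k)) := by
  refine state_mono_ev hst hT (hf.bdd hs) (hf.bdd fun k => (hs k).trans (hsu k)) ?_
  obtain ⟨⟨C, hC⟩, hm⟩ := hf
  intro ε hε
  obtain ⟨N, hN⟩ := exists_nat_gt (d * C / (c * ε))
  refine ⟨N + 1, fun k hk => ?_⟩
  have hk' : (N : ℝ) + 1 ≤ k := by exact_mod_cast hk
  have hk0 : (0 : ℝ) < k := by linarith [(Nat.cast_nonneg N : (0 : ℝ) ≤ N)]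
  have hsk : 0 < s k := lt_of_lt_of_le (by positivity) (hsc k)
  have h1 := hm (s k) (u k) hsk (hsu k)
  have h2 := hC (u k) ((hs k).trans (hsu k))
  have h3 : (u k - s k) * f (u k) ≤ d * C :=
    (le_abs_self _).trans (by
      rw [abs_mul, abs_of_nonneg (sub_nonneg.2 (hsu k))]
      exact mul_le_mul (by linarith [hus k]) h2 (abs_nonneg _)
        (by linarith [hus k, hsu k]))
  have h4 : d * C ≤ s k * ε := by
    rw [div_lt_iff₀ (by positivity)] at hN
    have : (N : ℝ) * (c * ε) ≤ k * (c * ε) := by gcongr; linarith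
    have : c * k * ε ≤ s k * ε := by gcongr; exact hsc k
    linarith
  refine le_of_mul_le_mul_left ?_ hsk
  linarith

lemma GoodFun.nat_dil {ξ : (ℕ → ℝ) → ℝ} (hst : IsLinfState ξ) (hT : ShiftInv ξ) (hD : DilInv ξ)
    {f : ℝ → ℝ} (hf : GoodFun f) {j : ℕ} (hj : 0 < j) :
    ξ (fun k => f ((k : ℝ) / j)) = ξ (fun k => f (k : ℝ)) := by
  have hj' : (0 : ℝ) < j := by exact_mod_cast hj
  have hb1 : IsBddSeq (fun k : ℕ => f (k : ℝ)) := hf.bdd fun k => by positivity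
  have hb2 : IsBddSeq (fun k : ℕ => f ((k : ℝ) / j)) := hf.bdd fun k => by positivity
  have key1 : ∀ k : ℕ, (k : ℝ) / j ≤ ((k + j - 1) / j : ℕ) := by
    intro k
    rw [div_le_iff₀ hj']
    have h1 := Nat.div_add_mod (k + j - 1) j
    have h2 := Nat.mod_lt (k + j - 1) hj
    have h3 : k ≤ ((k + j - 1) / j) * j := by rw [mul_comm]; omega
    exact_mod_cast h3
  have key2 : ∀ k : ℕ, (((k + j - 1) / j : ℕ) : ℝ) ≤ (k : ℝ) / j + 1 := by
    intro k
    have h3 : ((k + j - 1) / j) * j ≤ k + j := (Nat.div_mul_le_self _ _).trans (by omega)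
    have h4 : (((k + j - 1) / j : ℕ) : ℝ) * j ≤ k + j := by exact_mod_cast h3
    rw [← le_div_iff₀ hj'] at h4
    rwa [add_div, div_self hj'.ne'] at h4
  rw [← hD j hj _ hb1]
  apply le_antisymm
  · exact hf.compare hst hT (s := fun k => (k : ℝ) / j) (fun k => by positivity)
      (c := 1 / j) (d := 1) (by positivity) (fun k => by rw [one_div_mul_eq_div])
      key1 key2
  · rw [← shift_many hT hb2 j]
    have e : ∀ k : ℕ, ((k + j : ℕ) : ℝ) / j = (k : ℝ) / j + 1 := fun k => by
      push_cast
      rw [add_div, div_self hj'.ne']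
    refine hf.compare hst hT (s := fun k => (((k + j - 1) / j : ℕ) : ℝ))
      (u := fun k => ((k + j : ℕ) : ℝ) / j) (fun k => by positivity)
      (c := 1 / j) (d := 1) (by positivity)
      (fun k => by rw [one_div_mul_eq_div]; exact key1 k)
      (fun k => by simp only [e]; exact key2 k)
      (fun k => by simp only [e]; linarith [key1 k])

lemma GoodFun.rat_dil {ξ : (ℕ → ℝ) → ℝ} (hst : IsLinfState ξ) (hT : ShiftInv ξ) (hD : DilInv ξ)
    {f : ℝ → ℝ} (hf : GoodFun f) {x : ℚ} (hx : 0 < x) :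
    ξ (fun k => f ((k : ℝ) * x)) = ξ (fun k => f (k : ℝ)) := by
  have hq : 0 < x.num.toNat := by
    have := Rat.num_pos.2 hx
    omega
  have hp : 0 < x.den := x.den_pos
  obtain ⟨q, hqd⟩ : ∃ q, q = x.num.toNat := ⟨_, rfl⟩
  rw [← hqd] at hq
  have hq' : (0 : ℝ) < q := by exact_mod_cast hq
  have hxe : (x : ℝ) = (q : ℝ) / x.den := by
    rw [Rat.cast_def]
    congr 1
    have : (q : ℤ) = x.num := by
      have := Rat.num_pos.2 hx
      omega
    exact_mod_cast this.symm
  have hs := hf.scale hq'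
  have e1 := hs.nat_dil hst hT hD hp
  have e2 := hs.nat_dil hst hT hD hq
  have e3 : ∀ k : ℕ, (k : ℝ) * x = q * ((k : ℝ) / x.den) := fun k => by rw [hxe]; ring
  simp only [e3]
  rw [e1, ← e2]
  congr 1
  funext k
  congr 1
  field_simp

lemma GoodFun.mul_mono {ξ : (ℕ → ℝ) → ℝ} (hst : IsLinfState ξ) (hT : ShiftInv ξ)
    {f : ℝ → ℝ} (hf : GoodFun f) {r s : ℝ} (hr : 0 < r) (hrs : r ≤ s) :
    r * ξ (fun k => f ((k : ℝ) * r)) ≤ s * ξ (fun k => f ((k : ℝ) * s)) := by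
  have hs : 0 < s := hr.trans_le hrs
  have b1 : IsBddSeq (fun k : ℕ => f ((k : ℝ) * r)) := hf.bdd fun k => by positivity
  have b2 : IsBddSeq (fun k : ℕ => f ((k : ℝ) * s)) := hf.bdd fun k => by positivity
  rw [← hst.2.1 _ _ b1, ← hst.2.1 _ _ b2]
  have bs : ∀ (c : ℝ) (a : ℕ → ℝ), IsBddSeq a → IsBddSeq (c • a) := by
    rintro c a ⟨A, hA⟩
    refine ⟨|c| * A, fun k => ?_⟩
    simp only [Pi.smul_apply, smul_eq_mul, abs_mul]
    exact mul_le_mul_of_nonneg_left (hA k) (abs_nonneg _)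
  refine state_mono_ev hst hT (bs _ _ b1) (bs _ _ b2) fun ε hε => ⟨1, fun k hk => ?_⟩
  have hk' : (0 : ℝ) < k := by exact_mod_cast hk
  simp only [Pi.smul_apply, smul_eq_mul]
  have := hf.2 (k * r) (k * s) (by positivity) (by gcongr)
  have h2 : (k : ℝ) * (r * f (k * r)) ≤ k * (s * f (k * s)) := by linarith
  linarith [le_of_mul_le_mul_left h2 hk']


/-- for a state `ξ` on `ℓ^∞` invariant under the unit shift `T_1` and
under all dilations `D_j`, `j ∈ ℕ`, one has `ξ({f(k/a)}_k) = ξ({f(k)}_k)` for every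
`a > 0`, where `f` is bounded on `[0,∞)` with `f(t) = g(t)/t` for `t > 0`,
`g` nondecreasing on `[0,∞)`. -/
theorem shift_dilation_invariant_state_real_dilation
    (ξ : (ℕ → ℝ) → ℝ) (hst : IsLinfState ξ) (hT : ShiftInv ξ) (hD : DilInv ξ)
    (f g : ℝ → ℝ) (hfb : ∃ C, ∀ t ≥ (0 : ℝ), |f t| ≤ C)
    (hfg : ∀ t > (0 : ℝ), f t = g t / t) (hg : MonotoneOn g (Set.Ici 0))
    (a : ℝ) (ha : 0 < a) :
    ξ (fun k => f ((k : ℝ) / a)) = ξ (fun k => f (k : ℝ)) := by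

  have hf : GoodFun f := by
    refine ⟨hfb, fun t u ht htu => ?_⟩
    have hu : 0 < u := ht.trans_le htu
    rw [hfg t ht, hfg u hu, mul_div_cancel₀ _ ht.ne', mul_div_cancel₀ _ hu.ne']
    exact hg ht.le hu.le htu
  obtain ⟨x, hx⟩ : ∃ x, x = a⁻¹ := ⟨_, rfl⟩
  have hx0 : 0 < x := by rw [hx]; positivity
  simp only [div_eq_mul_inv, ← hx]
  obtain ⟨L, hL⟩ : ∃ L, L = ξ (fun k => f (k : ℝ)) := ⟨_, rfl⟩
  obtain ⟨F, hF⟩ : ∃ F, F = ξ (fun k => f ((k : ℝ) * x)) := ⟨_, rfl⟩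
  rw [← hL, ← hF]
  have lo : ∀ r : ℚ, 0 < r → (r : ℝ) < x → r * L ≤ x * F := fun r hr hrx => by
    have := hf.mul_mono hst hT (r := r) (s := x) (by exact_mod_cast hr) hrx.le
    rwa [hf.rat_dil hst hT hD hr, ← hL, ← hF] at this
  have hi : ∀ r : ℚ, x < r → x * F ≤ r * L := fun r hrx => by
    have hr : 0 < r := by exact_mod_cast hx0.trans hrx
    have := hf.mul_mono hst hT (r := x) (s := r) hx0 hrx.le
    rwa [hf.rat_dil hst hT hD hr, ← hL, ← hF] at this
  have hM : 0 < |L| + 1 := by positivity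
  have hxx : x * F = x * L := by
    apply le_antisymm
    · refine le_of_forall_pos_le_add fun ε hε => ?_
      have hd : 0 < ε / (|L| + 1) := by positivity
      obtain ⟨r, h1, h2⟩ := exists_rat_btwn (show x < x + ε / (|L| + 1) by linarith)
      have h3 : (r - x) * L ≤ ε / (|L| + 1) * (|L| + 1) :=
        mul_le_mul_of_nonneg (by linarith) (by linarith [le_abs_self L]) (by linarith) hM.le
      rw [div_mul_cancel₀ _ hM.ne'] at h3
      linarith [hi r h1]
    · refine le_of_forall_pos_le_add fun ε hε => ?_
      have hd : 0 < ε / (|L| + 1) := by positivity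
      obtain ⟨r, h1, h2⟩ := exists_rat_btwn (show max 0 (x - ε / (|L| + 1)) < x from
        max_lt hx0 (by linarith))
      have h0 := (le_max_left _ _).trans_lt h1
      have h1' := (le_max_right _ _).trans_lt h1
      have h3 : (x - r) * L ≤ ε / (|L| + 1) * (|L| + 1) :=
        mul_le_mul_of_nonneg (by linarith) (by linarith [le_abs_self L]) (by linarith) hM.le
      rw [div_mul_cancel₀ _ hM.ne'] at h3
      linarith [lo r (by exact_mod_cast h0) h2]
  exact mul_left_cancel₀ hx0.ne' hxx
end
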